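/- Let ρ : M → ℝ be a mapping. Then ρ commutes with the set 𝒰 of utility transforms, in the sense that F_U ∘ ρ = ρ ∘ 𝒰 (i.e., for every u ∈ F_U there exists ψ ∈ F_U with ψ ∘ ρ = ρ ∘ T^u, and for every ψ ∈ F_U there exists u ∈ F_U with ψ ∘ ρ = ρ ∘ T^u), if and only if there exist a strictly monotone, continuous, surjective function h : ℝ → ℝ and a quantile functional ρ̂ : M → ℝ such that ρ = h ∘ ρ̂, where ρ̂ is either a left quantile F ↦ F_L^{-1}(p) for some fixed p ∈ (0,1] or a right quantile F ↦ F_R^{-1}(p) for some fixed p ∈ [0,1). -/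

import Mathlib

/-!
Write `δ_x` for the point mass at `x`, and `T^u` for the utility transform.

**Quantiles commute.** Both kinds of quantile have the form `F ↦ inf {x | P (F x)}` for an upward
closed predicate `P` with `¬ P 0` and `P 1`.  Such an infimum is the unique threshold between the
region where `P (F x)` fails and the region where it holds, and a continuous increasing `u` moves
the threshold `q` of `F` to the threshold `u q` of `T^u F` (`sInf_utilityT`).  Hence for
`ρ = h ∘ ρ̂` the functions `ψ` and `u` correspond to each other through conjugation by `h`.

**Commuting functionals are quantiles.** Put `g x = ρ δ_x`.  Constant `ψ` show that `g` is
surjective.  Any `a ≤ b` are the images of given `x < y` under some utility function; it follows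
that `g` is injective and that it is strictly monotone or strictly antitone
(`exists_strict_of_commutes`).  With `r F = g⁻¹ (ρ F)` one gets `r (T^u F) = u (r F)` for every `u`.

Such an equivariant `r` is a quantile (`exists_threshold_of_equivariant`).  On the distribution with
mass `s` at `0` and `1 - s` at `1`, invariance under a suitable `u` forces `r ∈ {0, 1}`; let `A` be
the set of `s` for which the value is `0`.  For any `F` and `t`, insert a gap of length `1` at `t`
to obtain `G`.  Collapsing the gap sends `G` to `F`; collapsing everything but the gap sends `G` to
the two-point distribution with mass `F t` at `0`.  Therefore `F t ∈ A` implies `r F ≤ t`, and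
`F t ∉ A` implies `t ≤ r F`.  Applied to the uniform distribution on `[0, 1]`, this shows that `A`
is a half-line starting at `p = r(uniform)`, closed (left quantile) or open (right quantile).
-/


open MeasureTheory Filter Topology Set

noncomputable section

/-- The set of cdfs of compactly supported probability distributions on ℝ:
increasing, right-continuous, equal to `0` for all sufficiently small `x` and
equal to `1` for all sufficiently large `x`. -/
def mSet : Set (ℝ → ℝ) :=
  {F | Monotone F ∧ (∀ x, ContinuousWithinAt F (Set.Ici x) x) ∧
    (∃ a, ∀ x ≤ a, F x = 0) ∧ (∃ b, ∀ x, b ≤ x → F x = 1)}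

/-- The set of cdfs of all probability distributions on ℝ: increasing,
right-continuous, with limit `0` at `-∞` and limit `1` at `+∞`. -/
def m0Set : Set (ℝ → ℝ) :=
  {F | Monotone F ∧ (∀ x, ContinuousWithinAt F (Set.Ici x) x) ∧
    Tendsto F atBot (𝓝 0) ∧ Tendsto F atTop (𝓝 1)}

/-- A utility function: increasing (non-strict) and continuous. -/
def IsUF (u : ℝ → ℝ) : Prop := Monotone u ∧ Continuous u

/-- An increasing and left-continuous function on ℝ. -/
def IsLeftCtsIncr (u : ℝ → ℝ) : Prop :=
  Monotone u ∧ ∀ x, ContinuousWithinAt u (Set.Iic x) x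

/-- A distortion function: an increasing function `d : [0,1] → [0,1]` with
`d 0 = 0` and `d 1 = 1` (values outside `[0,1]` are irrelevant). -/
def IsDF (d : ℝ → ℝ) : Prop :=
  MonotoneOn d (Set.Icc 0 1) ∧ d 0 = 0 ∧ d 1 = 1

/-- Right-continuity of a distortion function on `[0,1)`. -/
def DFRightCts (d : ℝ → ℝ) : Prop :=
  ∀ x ∈ Set.Ico (0:ℝ) 1, ContinuousWithinAt d (Set.Ioi x) x

/-- A distortion function with moreover `d(0+) = 0` and `d(1-) = 1`. -/
def IsDFhat (d : ℝ → ℝ) : Prop :=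
  IsDF d ∧ Tendsto d (𝓝[>] (0:ℝ)) (𝓝 0) ∧ Tendsto d (𝓝[<] (1:ℝ)) (𝓝 1)

/-- The probability distortion generated by `d`:  `T_d F x = (d ∘ F)(x+)`,
the right limit of `d ∘ F` at `x`. -/
noncomputable def distortT (d F : ℝ → ℝ) : ℝ → ℝ :=
  fun x => Function.rightLim (d ∘ F) x

/-- The utility transform `T^u`: it maps a cdf `F` to the cdf of the
pushforward under `u` of the probability measure with cdf `F`. -/
noncomputable def utilityT (u F : ℝ → ℝ) : ℝ → ℝ := by
  classical
  exact
    if h : Monotone F ∧ ∀ x, ContinuousWithinAt F (Set.Ici x) x then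
      fun x => ((StieltjesFunction.measure ⟨F, h.1, h.2⟩).map u (Set.Iic x)).toReal
    else F

/-- Left quantile `F_L^{-1}(p) = inf {x | F x ≥ p}`. -/
noncomputable def leftQ (F : ℝ → ℝ) (p : ℝ) : ℝ := sInf {x | p ≤ F x}

/-- Right quantile `F_R^{-1}(p) = inf {x | F x > p}`. -/
noncomputable def rightQ (F : ℝ → ℝ) (p : ℝ) : ℝ := sInf {x | p < F x}

/-! ### Utility transforms of cdfs -/

lemma mSet.nonneg {F : ℝ → ℝ} (hF : F ∈ mSet) (x : ℝ) : 0 ≤ F x := by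
  obtain ⟨hm, -, ⟨a, ha⟩, -⟩ := hF
  rw [← ha (min a x) (min_le_left _ _)]
  exact hm (min_le_right _ _)

lemma mSet.le_one {F : ℝ → ℝ} (hF : F ∈ mSet) (x : ℝ) : F x ≤ 1 := by
  obtain ⟨hm, -, -, ⟨b, hb⟩⟩ := hF
  rw [← hb (max b x) (le_max_left _ _)]
  exact hm (le_max_right _ _)

/-- The Stieltjes function of a cdf in `mSet`. -/
def stj {F : ℝ → ℝ} (hF : F ∈ mSet) : StieltjesFunction ℝ := ⟨F, hF.1, hF.2.1⟩

lemma stj_atBot {F : ℝ → ℝ} (hF : F ∈ mSet) : Tendsto (stj hF) atBot (𝓝 0) := by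
  obtain ⟨a, ha⟩ := hF.2.2.1
  refine tendsto_const_nhds.congr' ?_
  filter_upwards [eventually_le_atBot a] with x hx using (ha x hx).symm

lemma stj_atTop {F : ℝ → ℝ} (hF : F ∈ mSet) : Tendsto (stj hF) atTop (𝓝 1) := by
  obtain ⟨b, hb⟩ := hF.2.2.2
  refine tendsto_const_nhds.congr' ?_
  filter_upwards [eventually_ge_atTop b] with x hx using (hb x hx).symm

lemma stj_prob {F : ℝ → ℝ} (hF : F ∈ mSet) : IsProbabilityMeasure (stj hF).measure :=
  (stj hF).isProbabilityMeasure (stj_atBot hF) (stj_atTop hF)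

lemma utilityT_eq {F u : ℝ → ℝ} (hF : F ∈ mSet) (hu : IsUF u) (x : ℝ) :
    utilityT u F x = ((stj hF).measure (u ⁻¹' Iic x)).toReal := by
  have h : Monotone F ∧ ∀ x, ContinuousWithinAt F (Set.Ici x) x := ⟨hF.1, hF.2.1⟩
  unfold utilityT
  rw [dif_pos h, Measure.map_apply hu.2.measurable measurableSet_Iic]
  rfl

lemma utilityT_of_Iic {F u : ℝ → ℝ} (hF : F ∈ mSet) (hu : IsUF u) {x c : ℝ}
    (h : ∀ y, u y ≤ x ↔ y ≤ c) : utilityT u F x = F c := by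
  have : u ⁻¹' Iic x = Iic c := by ext y; simpa using h y
  rw [utilityT_eq hF hu, this, (stj hF).measure_Iic (stj_atBot hF), sub_zero]
  exact ENNReal.toReal_ofReal (mSet.nonneg hF c)

lemma utilityT_of_empty {F u : ℝ → ℝ} (hF : F ∈ mSet) (hu : IsUF u) {x : ℝ}
    (h : ∀ y, x < u y) : utilityT u F x = 0 := by
  have : u ⁻¹' Iic x = ∅ := by ext y; simpa using h y
  rw [utilityT_eq hF hu, this]; simp

lemma utilityT_of_univ {F u : ℝ → ℝ} (hF : F ∈ mSet) (hu : IsUF u) {x : ℝ}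
    (h : ∀ y, u y ≤ x) : utilityT u F x = 1 := by
  have : u ⁻¹' Iic x = univ := by ext y; simpa using h y
  have hprob := stj_prob hF
  rw [utilityT_eq hF hu, this]; simp

/-- Sublevel sets of a continuous increasing function are empty, everything, or a closed
half-line. -/
lemma IsUF.trichotomy {u : ℝ → ℝ} (hu : IsUF u) (x : ℝ) :
    (∀ y, x < u y) ∨ (∀ y, u y ≤ x) ∨ ∃ c, ∀ y, u y ≤ x ↔ y ≤ c := by
  by_cases h1 : ∀ y, x < u y
  · exact Or.inl h1
  by_cases h2 : ∀ y, u y ≤ x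
  · exact Or.inr (Or.inl h2)
  push Not at h1 h2
  obtain ⟨a, ha⟩ := h1
  obtain ⟨b, hb⟩ := h2
  have hbdd : BddAbove (u ⁻¹' Iic x) := ⟨b, fun y hy => by
    by_contra hby
    exact absurd (hu.1 (not_le.1 hby).le) (not_le.2 (lt_of_le_of_lt hy hb))⟩
  have hmem : sSup (u ⁻¹' Iic x) ∈ u ⁻¹' Iic x :=
    (isClosed_Iic.preimage hu.2).csSup_mem ⟨a, ha⟩ hbdd
  exact Or.inr (Or.inr ⟨_, fun y => ⟨fun hy => le_csSup hbdd hy,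
    fun hy => (hu.1 hy).trans hmem⟩⟩)

lemma utilityT_mem {F u : ℝ → ℝ} (hF : F ∈ mSet) (hu : IsUF u) : utilityT u F ∈ mSet := by
  have := stj_prob hF
  have : IsProbabilityMeasure ((stj hF).measure.map u) :=
    Measure.isProbabilityMeasure_map hu.2.measurable.aemeasurable
  have key : utilityT u F = ProbabilityTheory.cdf ((stj hF).measure.map u) := by
    ext x
    rw [utilityT_eq hF hu, ProbabilityTheory.cdf_eq_real, Measure.real,
      Measure.map_apply hu.2.measurable measurableSet_Iic]
  refine ⟨?_, ?_, ?_, ?_⟩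
  · rw [key]; exact ProbabilityTheory.monotone_cdf _
  · rw [key]; exact (ProbabilityTheory.cdf _).right_continuous
  · obtain ⟨a, ha⟩ := hF.2.2.1
    refine ⟨u a - 1, fun x hx => ?_⟩
    rcases hu.trichotomy x with h | h | ⟨c, h⟩
    · exact utilityT_of_empty hF hu h
    · linarith [h a]
    · rw [utilityT_of_Iic hF hu h]
      refine ha c (le_of_lt (lt_of_not_ge fun hac => ?_))
      linarith [(h a).2 hac]
  · obtain ⟨b, hb⟩ := hF.2.2.2
    refine ⟨u b, fun x hx => ?_⟩
    rcases hu.trichotomy x with h | h | ⟨c, h⟩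
    · linarith [h b]
    · exact utilityT_of_univ hF hu h
    · rw [utilityT_of_Iic hF hu h]
      exact hb c ((h b).1 hx)

/-! ### Quantiles as thresholds -/

lemma sInf_eq_of_threshold {F : ℝ → ℝ} {P : ℝ → Prop} {q : ℝ}
    (h1 : ∀ x < q, ¬ P (F x)) (h2 : ∀ x, q < x → P (F x)) : sInf {x | P (F x)} = q := by
  refine csInf_eq_of_forall_ge_of_forall_gt_exists_lt ⟨q + 1, h2 _ (by linarith)⟩ ?_ ?_
  · intro x hx
    by_contra hlt
    exact h1 x (not_le.1 hlt) hx
  · intro w hw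
    obtain ⟨y, hy1, hy2⟩ := exists_between hw
    exact ⟨y, h2 y hy1, hy2⟩

lemma threshold_sInf {F : ℝ → ℝ} {P : ℝ → Prop} (hF : F ∈ mSet)
    (hP : ∀ s t, s ≤ t → P s → P t) (h0 : ¬ P 0) (h1 : P 1) :
    (∀ x < sInf {x | P (F x)}, ¬ P (F x)) ∧ (∀ x, sInf {x | P (F x)} < x → P (F x)) := by
  obtain ⟨a, ha⟩ := hF.2.2.1
  obtain ⟨b, hb⟩ := hF.2.2.2
  have hbdd : BddBelow {x | P (F x)} := ⟨a, fun x hx => by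
    by_contra hlt
    exact h0 (ha x (not_le.1 hlt).le ▸ hx)⟩
  have hne : {x | P (F x)}.Nonempty := ⟨b, by simpa [hb b le_rfl] using h1⟩
  refine ⟨fun x hx hPx => absurd (csInf_le hbdd hPx) (not_le.2 hx), fun x hx => ?_⟩
  obtain ⟨y, hy, hyx⟩ := exists_lt_of_csInf_lt hne hx
  exact hP _ _ (hF.1 hyx.le) hy

lemma sInf_utilityT {F u : ℝ → ℝ} {P : ℝ → Prop} (hF : F ∈ mSet) (hu : IsUF u)
    (hP : ∀ s t, s ≤ t → P s → P t) (h0 : ¬ P 0) (h1 : P 1) :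
    sInf {x | P (utilityT u F x)} = u (sInf {x | P (F x)}) := by
  obtain ⟨hlo, hhi⟩ := threshold_sInf hF hP h0 h1
  set q := sInf {x | P (F x)}
  apply sInf_eq_of_threshold
  · intro x hx
    rcases hu.trichotomy x with h | h | ⟨c, h⟩
    · rwa [utilityT_of_empty hF hu h]
    · exact absurd (h q) (not_le.2 hx)
    · rw [utilityT_of_Iic hF hu h]
      exact hlo c (lt_of_not_ge fun hqc => absurd ((h q).2 hqc) (not_le.2 hx))
  · intro x hx
    rcases hu.trichotomy x with h | h | ⟨c, h⟩
    · exact absurd (h q) (not_lt.2 hx.le)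
    · rwa [utilityT_of_univ hF hu h]
    · rw [utilityT_of_Iic hF hu h]
      -- by continuity `u y < x` still holds slightly to the right of `q`, so `q < c`
      have hev : ∀ᶠ y in 𝓝[>] q, u y < x :=
        (hu.2.continuousAt.eventually_lt continuousAt_const hx).filter_mono nhdsWithin_le_nhds
      obtain ⟨y, hy, hqy⟩ := (hev.and self_mem_nhdsWithin).exists
      exact hhi c (lt_of_lt_of_le hqy ((h y).1 hy.le))

/-! ### Special distributions and utility functions -/

/-- The cdf of the distribution with mass `s` at `0` and mass `1 - s` at `1`. -/
def twoPt (s : ℝ) : ℝ → ℝ := fun x => if x < 0 then 0 else if x < 1 then s else 1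

/-- The cdf of the point mass at `a`. -/
def pointCdf (a : ℝ) : ℝ → ℝ := fun x => if x < a then 0 else 1

/-- The utility function `x ↦ max 0 (min x 1)`; also the cdf of the uniform distribution on
`[0, 1]`. -/
def clamp : ℝ → ℝ := fun x => max 0 (min x 1)

lemma clamp_isUF : IsUF clamp :=
  ⟨fun x y h => max_le_max le_rfl (min_le_min h le_rfl), by unfold clamp; fun_prop⟩

lemma clamp_nonneg (x : ℝ) : 0 ≤ clamp x := le_max_left _ _
lemma clamp_le_one (x : ℝ) : clamp x ≤ 1 := max_le zero_le_one (min_le_right _ _)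
lemma clamp_of_nonpos {x : ℝ} (h : x ≤ 0) : clamp x = 0 := by
  unfold clamp; rw [min_eq_left (by linarith), max_eq_left h]
lemma clamp_of_one_le {x : ℝ} (h : 1 ≤ x) : clamp x = 1 := by
  unfold clamp; rw [min_eq_right h, max_eq_right zero_le_one]
lemma clamp_of_mem {x : ℝ} (h0 : 0 ≤ x) (h1 : x ≤ 1) : clamp x = x := by
  unfold clamp; rw [min_eq_left h1, max_eq_right h0]
lemma clamp_le_iff {x y : ℝ} (h0 : 0 ≤ x) (h1 : x < 1) : clamp y ≤ x ↔ y ≤ x := by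
  unfold clamp
  rw [max_le_iff, min_le_iff]
  exact ⟨fun h => h.2.resolve_right (not_le.2 h1), fun h => ⟨h0, Or.inl h⟩⟩

lemma clamp_mem : clamp ∈ mSet :=
  ⟨clamp_isUF.1, fun _ => clamp_isUF.2.continuousWithinAt, ⟨0, fun _ => clamp_of_nonpos⟩,
    ⟨1, fun _ => clamp_of_one_le⟩⟩

/-- The utility function collapsing the interval `[t, t + 1]` to the point `t`. -/
def collapse (t : ℝ) : ℝ → ℝ := fun x => min x t + max (x - t - 1) 0

lemma collapse_of_le {t x : ℝ} (h : x ≤ t) : collapse t x = x := by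
  unfold collapse; rw [min_eq_left h, max_eq_right (by linarith)]; ring
lemma collapse_of_ge {t x : ℝ} (h : t + 1 ≤ x) : collapse t x = x - 1 := by
  unfold collapse; rw [min_eq_right (by linarith), max_eq_left (by linarith)]; ring
lemma collapse_of_mid {t x : ℝ} (h : t ≤ x) (h' : x ≤ t + 1) : collapse t x = t := by
  unfold collapse; rw [min_eq_right h, max_eq_right (by linarith)]; ring

lemma collapse_isUF (t : ℝ) : IsUF (collapse t) :=
  ⟨fun x y h => add_le_add (min_le_min h le_rfl) (max_le_max (by linarith) le_rfl), by
    unfold collapse; fun_prop⟩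

/-- Switching at `a` from one right-continuous function to another preserves
right-continuity: near `x` from the right, the conditions `y < a` and `x < a` are equivalent. -/
lemma step_rightCts {f g : ℝ → ℝ} (a : ℝ) (hf : ∀ x, ContinuousWithinAt f (Ici x) x)
    (hg : ∀ x, ContinuousWithinAt g (Ici x) x) (x : ℝ) :
    ContinuousWithinAt (fun x => if x < a then f x else g x) (Ici x) x := by
  by_cases hx : x < a
  · refine (hf x).congr_of_eventuallyEq ?_ (if_pos hx)
    filter_upwards [nhdsWithin_le_nhds (Iio_mem_nhds hx)] with y hy using if_pos hy
  · refine (hg x).congr_of_eventuallyEq ?_ (if_neg hx)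
    filter_upwards [self_mem_nhdsWithin] with y hy
    exact if_neg fun h => hx (lt_of_le_of_lt hy h)

lemma pointCdf_mem (a : ℝ) : pointCdf a ∈ mSet := by
  refine ⟨?_, step_rightCts a (fun _ => continuousWithinAt_const)
    (fun _ => continuousWithinAt_const), ⟨a - 1, ?_⟩, ⟨a, ?_⟩⟩
  · intro x y h
    unfold pointCdf
    split_ifs <;> linarith
  · intro x h
    exact if_pos (by linarith)
  · intro x h
    exact if_neg (not_lt.2 h)

lemma twoPt_mem {s : ℝ} (h0 : 0 ≤ s) (h1 : s ≤ 1) : twoPt s ∈ mSet := by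
  refine ⟨?_, step_rightCts 0 (fun _ => continuousWithinAt_const)
    (step_rightCts 1 (fun _ => continuousWithinAt_const)
      (fun _ => continuousWithinAt_const)), ⟨-1, ?_⟩, ⟨1, ?_⟩⟩
  · intro x y h
    unfold twoPt
    split_ifs <;> linarith
  · intro x h
    exact if_pos (by linarith)
  · intro x h
    unfold twoPt
    rw [if_neg (by linarith), if_neg (by linarith)]

lemma gap_mem {F : ℝ → ℝ} (hF : F ∈ mSet) (t : ℝ) : F ∘ collapse t ∈ mSet := by
  obtain ⟨hm, hc, ⟨a, ha⟩, ⟨b, hb⟩⟩ := hF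
  have hu := collapse_isUF t
  refine ⟨hm.comp hu.1, fun x => (hc _).comp hu.2.continuousWithinAt fun y hy => hu.1 hy,
    ⟨min a t, fun x hx => ?_⟩, ⟨max (b + 1) (t + 1), fun x hx => ?_⟩⟩
  · rw [Function.comp, collapse_of_le (hx.trans (min_le_right _ _))]
    exact ha x (hx.trans (min_le_left _ _))
  · rw [Function.comp, collapse_of_ge ((le_max_right _ _).trans hx)]
    exact hb _ (by linarith [(le_max_left _ _).trans hx])

lemma utilityT_pointCdf {u : ℝ → ℝ} (hu : IsUF u) (a : ℝ) :
    utilityT u (pointCdf a) = pointCdf (u a) := by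
  ext x
  rcases hu.trichotomy x with h | h | ⟨c, h⟩
  · rw [utilityT_of_empty (pointCdf_mem a) hu h, pointCdf, if_pos (h a)]
  · rw [utilityT_of_univ (pointCdf_mem a) hu h, pointCdf, if_neg (not_lt.2 (h a))]
  · rw [utilityT_of_Iic (pointCdf_mem a) hu h]
    unfold pointCdf
    have := h a
    rw [← not_lt, ← not_lt, not_iff_not] at this
    simp only [this]

lemma utilityT_gap_collapse {F : ℝ → ℝ} (hF : F ∈ mSet) (t : ℝ) :
    utilityT (collapse t) (F ∘ collapse t) = F := by
  ext x
  have hu := collapse_isUF t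
  rcases lt_or_ge x t with hx | hx
  · rw [utilityT_of_Iic (c := x) (gap_mem hF t) hu, Function.comp, collapse_of_le hx.le]
    intro y
    rcases le_total y t with hy | hy
    · rw [collapse_of_le hy]
    · have := hu.1 hy
      rw [collapse_of_le le_rfl] at this
      constructor <;> intro <;> linarith
  · rw [utilityT_of_Iic (c := x + 1) (gap_mem hF t) hu, Function.comp,
      collapse_of_ge (by linarith), add_sub_cancel_right]
    intro y
    rcases le_total y (t + 1) with hy | hy
    · have := hu.1 hy
      rw [collapse_of_ge le_rfl] at this
      constructor <;> intro <;> linarith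
    · rw [collapse_of_ge hy]
      constructor <;> intro <;> linarith

lemma clamp_sub_isUF (t : ℝ) : IsUF (fun x => clamp (x - t)) :=
  ⟨fun _ _ h => clamp_isUF.1 (by linarith), clamp_isUF.2.comp (by fun_prop)⟩

lemma clamp_mul_isUF {k : ℝ} (hk : 0 ≤ k) : IsUF (fun x => clamp (k * x)) :=
  ⟨fun _ _ h => clamp_isUF.1 (mul_le_mul_of_nonneg_left h hk), clamp_isUF.2.comp (by fun_prop)⟩

lemma utilityT_gap_clamp {F : ℝ → ℝ} (hF : F ∈ mSet) (t : ℝ) :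
    utilityT (fun x => clamp (x - t)) (F ∘ collapse t) = twoPt (F t) := by
  ext x
  have hu := clamp_sub_isUF t
  unfold twoPt
  split_ifs with h0 h1
  · exact utilityT_of_empty (gap_mem hF t) hu fun y => h0.trans_le (clamp_nonneg _)
  · rw [utilityT_of_Iic (c := t + x) (gap_mem hF t) hu, Function.comp,
      collapse_of_mid (by linarith) (by linarith)]
    intro y
    rw [clamp_le_iff (not_lt.1 h0) h1]
    constructor <;> intro <;> linarith
  · exact utilityT_of_univ (gap_mem hF t) hu fun y => (clamp_le_one _).trans (not_lt.1 h1)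

lemma utilityT_twoPt {s : ℝ} (h0 : 0 ≤ s) (h1 : s ≤ 1) :
    utilityT (fun x => clamp (2 * x)) (twoPt s) = twoPt s := by
  ext x
  have hu := clamp_mul_isUF (k := 2) (by norm_num)
  have hm := twoPt_mem h0 h1
  conv_rhs => unfold twoPt
  split_ifs with hx0 hx1
  · exact utilityT_of_empty hm hu fun y => hx0.trans_le (clamp_nonneg _)
  · rw [utilityT_of_Iic (c := x / 2) hm hu]
    · unfold twoPt
      rw [if_neg (by linarith), if_pos (by linarith)]
    · intro y
      rw [clamp_le_iff (not_lt.1 hx0) hx1]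
      constructor <;> intro <;> linarith
  · exact utilityT_of_univ hm hu fun y => (clamp_le_one _).trans (not_lt.1 hx1)

/-! ### Equivariant functionals are quantiles -/

lemma twoPt_zero : twoPt 0 = pointCdf 1 := by
  ext x; unfold twoPt pointCdf; split_ifs <;> first | rfl | linarith

lemma twoPt_one : twoPt 1 = pointCdf 0 := by
  ext x; unfold twoPt pointCdf; split_ifs <;> rfl

lemma equivariant_pointCdf {r : (ℝ → ℝ) → ℝ}
    (hr : ∀ u, IsUF u → ∀ F ∈ mSet, r (utilityT u F) = u (r F)) (a : ℝ) : r (pointCdf a) = a := by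
  have hu : IsUF (fun _ : ℝ => a) := ⟨monotone_const, continuous_const⟩
  have h := hr _ hu _ (pointCdf_mem 0)
  rwa [utilityT_pointCdf hu] at h

lemma equivariant_twoPt {r : (ℝ → ℝ) → ℝ}
    (hr : ∀ u, IsUF u → ∀ F ∈ mSet, r (utilityT u F) = u (r F)) {s : ℝ} (h0 : 0 ≤ s) (h1 : s ≤ 1) :
    r (twoPt s) = 0 ∨ r (twoPt s) = 1 := by
  have h := hr _ (clamp_mul_isUF (k := 2) (by norm_num)) _ (twoPt_mem h0 h1)
  rw [utilityT_twoPt h0 h1] at h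
  rcases le_total (r (twoPt s)) 0 with h2 | h2
  · rw [clamp_of_nonpos (by linarith)] at h
    exact Or.inl h
  rcases le_total 1 (2 * r (twoPt s)) with h3 | h3
  · rw [clamp_of_one_le h3] at h
    exact Or.inr h
  · rw [clamp_of_mem (by linarith) h3] at h
    left; linarith

/-- Comparing the two ways of collapsing `F` with a gap inserted at `t`. -/
lemma equivariant_gap {r : (ℝ → ℝ) → ℝ}
    (hr : ∀ u, IsUF u → ∀ F ∈ mSet, r (utilityT u F) = u (r F)) {F : ℝ → ℝ} (hF : F ∈ mSet) (t : ℝ) :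
    (r (twoPt (F t)) = 0 → r F ≤ t) ∧ (r (twoPt (F t)) = 1 → t ≤ r F) := by
  have h1 := hr _ (collapse_isUF t) _ (gap_mem hF t)
  have h2 := hr _ (clamp_sub_isUF t) _ (gap_mem hF t)
  rw [utilityT_gap_collapse hF] at h1
  rw [utilityT_gap_clamp hF] at h2
  set z := r (F ∘ collapse t)
  constructor
  · intro h
    have hz : z ≤ t := by
      have := (clamp_le_iff (y := z - t) le_rfl zero_lt_one).1 (by linarith)
      linarith
    rwa [h1, collapse_of_le hz]
  · intro h
    have hz : t ≤ z := by
      by_contra hlt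
      rw [clamp_of_nonpos (by linarith)] at h2
      linarith
    rw [h1]
    have := (collapse_isUF t).1 hz
    rwa [collapse_of_le le_rfl] at this

lemma exists_threshold_of_equivariant {r : (ℝ → ℝ) → ℝ}
    (hr : ∀ u, IsUF u → ∀ F ∈ mSet, r (utilityT u F) = u (r F)) :
    (∃ p ∈ Ioc (0 : ℝ) 1, ∀ F ∈ mSet, r F = leftQ F p) ∨
      (∃ p ∈ Ico (0 : ℝ) 1, ∀ F ∈ mSet, r F = rightQ F p) := by
  have hone : (r (twoPt 1)) = 0 := by rw [twoPt_one, equivariant_pointCdf hr]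
  have hzero : (r (twoPt 0)) = 1 := by rw [twoPt_zero, equivariant_pointCdf hr]
  set p := r clamp with hp
  -- the uniform distribution locates the jump of `s ↦ r (twoPt s)` at `p`
  have hA : ∀ s, 0 ≤ s → s ≤ 1 →
      (r (twoPt s) = 0 → p ≤ s) ∧ (r (twoPt s) = 1 → s ≤ p) := by
    intro s h0 h1
    have := equivariant_gap hr clamp_mem s
    rwa [clamp_of_mem h0 h1] at this
  have hp1 : p ≤ 1 := (hA 1 zero_le_one le_rfl).1 hone
  have hp0 : 0 ≤ p := (hA 0 le_rfl zero_le_one).2 hzero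
  have main : ∀ P : ℝ → Prop,
      (∀ s, 0 ≤ s → s ≤ 1 → P s → r (twoPt s) = 0) →
      (∀ s, 0 ≤ s → s ≤ 1 → ¬ P s → r (twoPt s) = 1) →
      ∀ F ∈ mSet, r F = sInf {x | P (F x)} := by
    intro P hP hN F hF
    refine (sInf_eq_of_threshold (fun x hx hPx => ?_) (fun x hx => ?_)).symm
    · have := (equivariant_gap hr hF x).1 (hP _ (mSet.nonneg hF x) (mSet.le_one hF x) hPx)
      linarith
    · by_contra hPx
      have := (equivariant_gap hr hF x).2 (hN _ (mSet.nonneg hF x) (mSet.le_one hF x) hPx)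
      linarith
  rcases equivariant_twoPt hr hp0 hp1 with h | h
  · left
    refine ⟨p, ⟨hp0.lt_of_ne fun he => ?_, hp1⟩, main (fun s => p ≤ s) ?_ ?_⟩
    · rw [← he, hzero] at h
      exact one_ne_zero h
    · intro s h0 h1 hs
      rcases hs.eq_or_lt with rfl | hs
      · exact h
      · exact (equivariant_twoPt hr h0 h1).resolve_right fun h' =>
          absurd ((hA s h0 h1).2 h') (not_le.2 hs)
    · intro s h0 h1 hs
      exact (equivariant_twoPt hr h0 h1).resolve_left fun h' => hs ((hA s h0 h1).1 h')
  · right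
    refine ⟨p, ⟨hp0, hp1.lt_of_ne fun he => ?_⟩, main (fun s => p < s) ?_ ?_⟩
    · rw [he, hone] at h
      exact zero_ne_one h
    · intro s h0 h1 hs
      exact (equivariant_twoPt hr h0 h1).resolve_right fun h' =>
          absurd ((hA s h0 h1).2 h') (not_le.2 hs)
    · intro s h0 h1 hs
      rcases (not_lt.1 hs).eq_or_lt with rfl | hs
      · exact h
      · exact (equivariant_twoPt hr h0 h1).resolve_left fun h' =>
          absurd ((hA s h0 h1).1 h') (not_le.2 hs)

/-! ### Reduction to the equivariant case -/

/-- A utility function can carry any `x < y` to any `a ≤ b`. -/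
lemma exists_isUF_interp {x y a b : ℝ} (hxy : x < y) (hab : a ≤ b) :
    ∃ u, IsUF u ∧ u x = a ∧ u y = b := by
  have hd : 0 < y - x := sub_pos.2 hxy
  refine ⟨fun z => a + (b - a) * clamp ((z - x) / (y - x)), ⟨fun z w h => ?_, ?_⟩, ?_, ?_⟩
  · have : clamp ((z - x) / (y - x)) ≤ clamp ((w - x) / (y - x)) :=
      clamp_isUF.1 (by gcongr)
    have := mul_le_mul_of_nonneg_left this (sub_nonneg.2 hab)
    simpa using this
  · have : Continuous fun z => clamp ((z - x) / (y - x)) := clamp_isUF.2.comp (by fun_prop)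
    fun_prop
  · simp [clamp_of_nonpos]
  · simp [div_self hd.ne', clamp_of_one_le]

/-- If every utility function is conjugated by the surjection `g` to a utility function, then `g`
is strictly monotone or strictly antitone. -/
lemma exists_strict_of_commutes {g : ℝ → ℝ} (hs : Function.Surjective g)
    (hg : ∀ u, IsUF u → ∃ ψ, IsUF ψ ∧ ∀ x, ψ (g x) = g (u x)) :
    StrictMono g ∨ StrictAnti g := by
  have hne : ∀ x y, x < y → g x ≠ g y := by
    intro x y hxy he
    have hle : ∀ a b, a ≤ b → g a = g b := by
      intro a b hab
      obtain ⟨u, hu, rfl, rfl⟩ := exists_isUF_interp hxy hab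
      obtain ⟨ψ, -, hψ⟩ := hg u hu
      rw [← hψ, ← hψ, he]
    obtain ⟨a, ha⟩ := hs 0
    obtain ⟨b, hb⟩ := hs 1
    rcases le_total a b with h | h
    · linarith [hle a b h]
    · linarith [hle b a h]
  by_cases hex : ∃ x y, x < y ∧ g x < g y
  · left
    obtain ⟨x, y, hxy, hlt⟩ := hex
    intro a b hab
    obtain ⟨u, hu, hua, hub⟩ := exists_isUF_interp hxy hab.le
    obtain ⟨ψ, hψm, hψ⟩ := hg u hu
    refine lt_of_le_of_ne ?_ (hne a b hab)
    rw [← hua, ← hub, ← hψ, ← hψ]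
    exact hψm.1 hlt.le
  · right
    push Not at hex
    exact fun a b hab => lt_of_le_of_ne (hex a b hab) (hne a b hab).symm

lemma continuous_of_strict_surj {g : ℝ → ℝ} (hm : StrictMono g ∨ StrictAnti g)
    (hs : Function.Surjective g) : Continuous g := by
  rcases hm with h | h
  · exact h.monotone.continuous_of_surjective hs
  · have hneg : Continuous fun x => -g x := by
      apply Monotone.continuous_of_surjective (fun x y hxy => neg_le_neg (h.antitone hxy))
      intro y
      obtain ⟨x, hx⟩ := hs (-y)
      exact ⟨x, by simp [hx]⟩
    have heq : g = fun x => -(-g x) := by ext x; rw [neg_neg]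
    rw [heq]
    exact hneg.neg

/-- Conjugating a utility function by a strictly monotone or antitone bijection gives a utility
function. -/
lemma IsUF.conj {u f g : ℝ → ℝ} (hu : IsUF u) (hm : StrictMono f ∨ StrictAnti f)
    (hfg : Function.RightInverse g f) (hgf : Function.LeftInverse g f) :
    IsUF (f ∘ u ∘ g) ∧ IsUF (g ∘ u ∘ f) := by
  have hf : Continuous f := continuous_of_strict_surj hm hfg.surjective
  have hgm : (StrictMono f ∧ StrictMono g) ∨ (StrictAnti f ∧ StrictAnti g) := by
    rcases hm with h | h
    · exact Or.inl ⟨h, fun a b hab => h.lt_iff_lt.1 (by rwa [hfg, hfg])⟩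
    · exact Or.inr ⟨h, fun a b hab => h.lt_iff_gt.1 (by rwa [hfg, hfg])⟩
  have hg : Continuous g :=
    continuous_of_strict_surj (hgm.imp And.right And.right) hgf.surjective
  refine ⟨⟨?_, hf.comp (hu.2.comp hg)⟩, ⟨?_, hg.comp (hu.2.comp hf)⟩⟩ <;>
    rcases hgm with ⟨h1, h2⟩ | ⟨h1, h2⟩
  · exact h1.monotone.comp (hu.1.comp h2.monotone)
  · exact h1.antitone.comp (hu.1.comp_antitone h2.antitone)
  · exact h2.monotone.comp (hu.1.comp h1.monotone)
  · exact h2.antitone.comp (hu.1.comp_antitone h1.antitone)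

/-- A functional `h ∘ q` with `q` equivariant commutes with the utility transforms. -/
lemma commutes_of_equivariant {ρ q : (ℝ → ℝ) → ℝ} {h : ℝ → ℝ}
    (hm : StrictMono h ∨ StrictAnti h) (hs : Function.Surjective h)
    (hρ : ∀ F ∈ mSet, ρ F = h (q F))
    (hq : ∀ u, IsUF u → ∀ F ∈ mSet, q (utilityT u F) = u (q F)) :
    (∀ u : ℝ → ℝ, IsUF u → ∃ ψ : ℝ → ℝ, IsUF ψ ∧
        ∀ F ∈ mSet, ψ (ρ F) = ρ (utilityT u F)) ∧
      (∀ ψ : ℝ → ℝ, IsUF ψ → ∃ u : ℝ → ℝ, IsUF u ∧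
        ∀ F ∈ mSet, ψ (ρ F) = ρ (utilityT u F)) := by
  have hinj : Function.Injective h := hm.elim StrictMono.injective StrictAnti.injective
  have hr := Function.rightInverse_surjInv hs
  have hl := Function.leftInverse_surjInv ⟨hinj, hs⟩
  refine ⟨fun u hu => ⟨_, (hu.conj hm hr hl).1, fun F hF => ?_⟩,
    fun ψ hψ => ⟨_, (hψ.conj hm hr hl).2, fun F hF => ?_⟩⟩
  · rw [hρ F hF, hρ _ (utilityT_mem hF hu), hq u hu F hF]
    simp only [Function.comp]
    rw [hl]
  · have hu := (hψ.conj hm hr hl).2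
    rw [hρ F hF, hρ _ (utilityT_mem hF hu), hq _ hu F hF]
    simp only [Function.comp]
    rw [hr]

/-- A functional `ρ : M → ℝ` commutes with the set `𝒰` of utility transforms,
in the sense `F_U ∘ ρ = ρ ∘ 𝒰`, if and only if `ρ = h ∘ ρ̂` for some strictly
monotone, continuous, surjective `h : ℝ → ℝ` and some quantile functional `ρ̂`
(a left quantile at some fixed `p ∈ (0,1]` or a right quantile at some fixed
`p ∈ [0,1)`). -/
theorem stmt5 (ρ : (ℝ → ℝ) → ℝ) :
    ((∀ u : ℝ → ℝ, IsUF u → ∃ ψ : ℝ → ℝ, IsUF ψ ∧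
        ∀ F ∈ mSet, ψ (ρ F) = ρ (utilityT u F)) ∧
      (∀ ψ : ℝ → ℝ, IsUF ψ → ∃ u : ℝ → ℝ, IsUF u ∧
        ∀ F ∈ mSet, ψ (ρ F) = ρ (utilityT u F))) ↔
      ∃ h : ℝ → ℝ, (StrictMono h ∨ StrictAnti h) ∧ Continuous h ∧
        Function.Surjective h ∧
        ((∃ p ∈ Set.Ioc (0:ℝ) 1, ∀ F ∈ mSet, ρ F = h (leftQ F p)) ∨
          (∃ p ∈ Set.Ico (0:ℝ) 1, ∀ F ∈ mSet, ρ F = h (rightQ F p))) := by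
  constructor
  · rintro ⟨h1, h2⟩
    have hs : Function.Surjective fun x => ρ (pointCdf x) := by
      intro c
      obtain ⟨u, hu, h⟩ := h2 (fun _ => c) ⟨monotone_const, continuous_const⟩
      refine ⟨u 0, ?_⟩
      have := h _ (pointCdf_mem 0)
      rw [utilityT_pointCdf hu] at this
      exact this.symm
    have hm := exists_strict_of_commutes hs (fun u hu => by
      obtain ⟨ψ, hψ, h⟩ := h1 u hu
      refine ⟨ψ, hψ, fun x => ?_⟩
      have := h _ (pointCdf_mem x)
      rwa [utilityT_pointCdf hu] at this)
    set g : ℝ → ℝ := fun x => ρ (pointCdf x) with hg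
    have hinj : Function.Injective g := hm.elim StrictMono.injective StrictAnti.injective
    have hr := Function.rightInverse_surjInv hs
    have heq : ∀ u, IsUF u → ∀ F ∈ mSet,
        Function.surjInv hs (ρ (utilityT u F)) = u (Function.surjInv hs (ρ F)) := by
      intro u hu F hF
      obtain ⟨ψ, -, h⟩ := h1 u hu
      apply hinj
      rw [hr, ← h F hF]
      -- evaluate the commutation relation at the point mass with the same value of `ρ` as `F`
      have hx := h _ (pointCdf_mem (Function.surjInv hs (ρ F)))
      rw [utilityT_pointCdf hu] at hx
      have hrF : ρ (pointCdf (Function.surjInv hs (ρ F))) = ρ F := hr (ρ F)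
      rw [hrF] at hx
      exact hx
    refine ⟨g, hm, continuous_of_strict_surj hm hs, hs, ?_⟩
    rcases exists_threshold_of_equivariant (r := fun F => Function.surjInv hs (ρ F)) heq with
      ⟨p, hp, h⟩ | ⟨p, hp, h⟩
    · exact Or.inl ⟨p, hp, fun F hF => by rw [← h F hF, hr]⟩
    · exact Or.inr ⟨p, hp, fun F hF => by rw [← h F hF, hr]⟩
  · rintro ⟨h, hm, -, hs, ⟨p, hp, hρ⟩ | ⟨p, hp, hρ⟩⟩
    · exact commutes_of_equivariant (q := fun F => leftQ F p) hm hs hρ fun u hu F hF =>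
        sInf_utilityT (P := fun s => p ≤ s) hF hu (fun _ _ h h' => h'.trans h)
          (not_le.2 hp.1) hp.2
    · exact commutes_of_equivariant (q := fun F => rightQ F p) hm hs hρ fun u hu F hF =>
        sInf_utilityT (P := fun s => p < s) hF hu (fun _ _ h h' => h'.trans_le h)
          (not_lt.2 hp.1) hp.2
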